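/- Let d₁, d₂ ≥ 1 be integers and s > 0. Define F(σ) := σ^{-d₂/(d₁+(1+s)d₂)} · E₁(σ, B₁) for σ ∈ (0,+∞), where B₁ is the ball in ℝ^{d₁} of volume 1 centered at the origin. Then F(σ) → +∞ as σ → 0⁺, F(σ) → +∞ as σ → +∞, and F attains a global minimum on (0,+∞): there exists σ* > 0 with F(σ*) ≤ F(σ) for all σ > 0. -/

import Mathlib

open MeasureTheory Set Filter

/-- First eigenvalue (Rayleigh quotient infimum) of the Schrödinger operator
`-Δ + σ |x|^{2s}` on `Ω ⊆ ℝ^d`. -/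
noncomputable def schrodingerE1 (d : ℕ) (s σ : ℝ) (Ω : Set (EuclideanSpace ℝ (Fin d))) : ℝ :=
  sInf { q : ℝ | ∃ f : EuclideanSpace ℝ (Fin d) → ℝ,
    ContDiff ℝ (⊤ : ℕ∞) f ∧ HasCompactSupport f ∧ tsupport f ⊆ Ω ∧ f ≠ 0 ∧
    q = (∫ x in Ω, (‖gradient f x‖ ^ 2 + σ * ‖x‖ ^ (2 * s) * (f x) ^ 2)) /
        (∫ x in Ω, (f x) ^ 2) }

section helpers

/-- admissible test functions -/
def AdmFn (d : ℕ) (Ω : Set (EuclideanSpace ℝ (Fin d))) (f : EuclideanSpace ℝ (Fin d) → ℝ) : Prop :=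
  ContDiff ℝ (⊤ : ℕ∞) f ∧ HasCompactSupport f ∧ tsupport f ⊆ Ω ∧ f ≠ 0

lemma norm_gradient_eq' {d : ℕ} (f : EuclideanSpace ℝ (Fin d) → ℝ) (x) :
    ‖gradient f x‖ = ‖fderiv ℝ f x‖ := by
  simp [gradient]

lemma adm_grad_zero {d : ℕ} {f : EuclideanSpace ℝ (Fin d) → ℝ} {x} (hx : x ∉ tsupport f) :
    ‖gradient f x‖ = 0 := by
  rw [norm_gradient_eq', norm_eq_zero]
  by_contra h
  exact hx (support_fderiv_subset ℝ (f := f) h)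

lemma int_sq {d : ℕ} {f : EuclideanSpace ℝ (Fin d) → ℝ} (hf : ContDiff ℝ (⊤ : ℕ∞) f)
    (hc : HasCompactSupport f) {g : EuclideanSpace ℝ (Fin d) → ℝ} (hg : Continuous g) :
    Integrable (fun x => g x * f x ^ 2) := by
  apply Continuous.integrable_of_hasCompactSupport
  · exact hg.mul (hf.continuous.pow 2)
  · exact hc.mono (fun x hx => by
      simp only [Function.mem_support] at hx ⊢
      intro h; simp [h] at hx)

lemma int_grad {d : ℕ} {f : EuclideanSpace ℝ (Fin d) → ℝ} (hf : ContDiff ℝ (⊤ : ℕ∞) f)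
    (hc : HasCompactSupport f) : Integrable (fun x => ‖gradient f x‖ ^ 2) := by
  simp only [norm_gradient_eq']
  apply Continuous.integrable_of_hasCompactSupport
  · exact ((hf.continuous_fderiv (by simp)).norm).pow 2
  · exact (hc.fderiv ℝ).mono (fun x hx => by
      simp only [Function.mem_support] at hx ⊢
      intro h; simp [h] at hx)

lemma key_ineq {d : ℕ} (i : Fin d) {f : EuclideanSpace ℝ (Fin d) → ℝ}
    (hf : ContDiff ℝ (⊤ : ℕ∞) f) (hc : HasCompactSupport f) {ρ : ℝ} (hρ : 0 < ρ) :
    ∫ x, (Real.cos (x i / ρ) - 1 / 4) * f x ^ 2 ≤ 4 * ρ ^ 2 * ∫ x, ‖gradient f x‖ ^ 2 := by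
  set v : EuclideanSpace ℝ (Fin d) := EuclideanSpace.single i 1 with hv
  have hvn : ‖v‖ = 1 := by simp [hv]
  have hfd : Differentiable ℝ f := hf.differentiable (by simp)
  have hcf' : Continuous (fun x => fderiv ℝ f x v) :=
    (hf.continuous_fderiv (by simp)).clm_apply continuous_const
  have hcoord : Continuous (fun x : EuclideanSpace ℝ (Fin d) => x i) := by fun_prop
  have hg : ∀ x : EuclideanSpace ℝ (Fin d),
      HasFDerivAt (fun x : EuclideanSpace ℝ (Fin d) => ρ * Real.sin (x i / ρ))
        (Real.cos (x i / ρ) • (EuclideanSpace.proj i : EuclideanSpace ℝ (Fin d) →L[ℝ] ℝ)) x := by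
    intro x
    have h1 : HasFDerivAt (fun x : EuclideanSpace ℝ (Fin d) => x i)
      (EuclideanSpace.proj i : EuclideanSpace ℝ (Fin d) →L[ℝ] ℝ) x :=
      (EuclideanSpace.proj i : EuclideanSpace ℝ (Fin d) →L[ℝ] ℝ).hasFDerivAt
    have h2 := ((h1.mul_const ρ⁻¹).sin).const_mul ρ
    have e : ρ • Real.cos (x i * ρ⁻¹) • ρ⁻¹ •
        (EuclideanSpace.proj i : EuclideanSpace ℝ (Fin d) →L[ℝ] ℝ)
        = Real.cos (x i / ρ) • (EuclideanSpace.proj i : EuclideanSpace ℝ (Fin d) →L[ℝ] ℝ) := by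
      rw [smul_smul, smul_smul, div_eq_mul_inv]
      congr 1
      rw [mul_right_comm, mul_inv_cancel₀ hρ.ne', one_mul]
    rw [← e]
    simpa only [div_eq_mul_inv] using h2
  have hf2 : ∀ x, HasFDerivAt (fun x => f x ^ 2) ((2 * f x) • fderiv ℝ f x) x := by
    intro x
    have := (hfd x).hasFDerivAt.pow 2
    simpa using this
  have hcos : Continuous (fun x : EuclideanSpace ℝ (Fin d) => Real.cos (x i / ρ)) :=
    Real.continuous_cos.comp (hcoord.div_const ρ)
  have hsin : Continuous (fun x : EuclideanSpace ℝ (Fin d) => ρ * Real.sin (x i / ρ)) :=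
    continuous_const.mul (Real.continuous_sin.comp (hcoord.div_const ρ))
  have hI1 : Integrable (fun x => 2 * f x * fderiv ℝ f x v * (ρ * Real.sin (x i / ρ))) := by
    apply Continuous.integrable_of_hasCompactSupport
    · exact ((continuous_const.mul hf.continuous).mul hcf').mul hsin
    · exact hc.mono (fun x hx => by
        simp only [Function.mem_support] at hx ⊢
        intro h; simp [h] at hx)
  have hI2 := int_sq hf hc hcos
  have hI3 := int_sq hf hc hsin
  have ibp := integral_mul_fderiv_eq_neg_fderiv_mul_of_integrable
    (μ := (volume : Measure (EuclideanSpace ℝ (Fin d))))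
    (f := fun x => f x ^ 2) (g := fun x => ρ * Real.sin (x i / ρ)) (v := v)
    (by simpa [fun x => (hf2 x).fderiv] using hI1)
    (by simpa [fun x => (hg x).fderiv, hv, mul_comm] using hI2)
    (by simpa [mul_comm] using hI3)
    (fun x _ => (hf2 x).differentiableAt) (fun x _ => (hg x).differentiableAt)
  have e1 : ∫ x, f x ^ 2 * fderiv ℝ (fun x : EuclideanSpace ℝ (Fin d) => ρ * Real.sin (x i / ρ)) x v
      = ∫ x, Real.cos (x i / ρ) * f x ^ 2 := by
    congr 1; ext x; rw [(hg x).fderiv]; simp [hv, mul_comm]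
  have e2 : ∫ x, fderiv ℝ (fun x => f x ^ 2) x v * (ρ * Real.sin (x i / ρ))
      = ∫ x, 2 * f x * fderiv ℝ f x v * (ρ * Real.sin (x i / ρ)) := by
    congr 1; ext x; rw [(hf2 x).fderiv]; simp
  rw [e1, e2, ← integral_neg] at ibp
  have hle : ∫ x, -(2 * f x * fderiv ℝ f x v * (ρ * Real.sin (x i / ρ)))
      ≤ ∫ x, ((1 / 4) * f x ^ 2 + 4 * ρ ^ 2 * ‖gradient f x‖ ^ 2) := by
    apply integral_mono hI1.neg
    · exact (int_sq hf hc continuous_const).add ((int_grad hf hc).const_mul _)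
    · intro x
      simp only [norm_gradient_eq', Pi.neg_apply]
      have h1 : |fderiv ℝ f x v| ≤ ‖fderiv ℝ f x‖ := by
        have := (fderiv ℝ f x).le_opNorm v
        simpa [hvn] using this
      have h2 : (fderiv ℝ f x v) ^ 2 ≤ ‖fderiv ℝ f x‖ ^ 2 := sq_le_sq.2 (by simpa using h1)
      have h3 := Real.sin_sq_le_one (x i / ρ)
      have h4 : (ρ * Real.sin (x i / ρ) * fderiv ℝ f x v) ^ 2 ≤ ρ ^ 2 * ‖fderiv ℝ f x‖ ^ 2 := by
        have : (ρ * Real.sin (x i / ρ) * fderiv ℝ f x v) ^ 2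
          = ρ ^ 2 * (Real.sin (x i / ρ) ^ 2 * (fderiv ℝ f x v) ^ 2) := by ring
        rw [this]
        apply mul_le_mul_of_nonneg_left _ (sq_nonneg _)
        calc _ ≤ 1 * (fderiv ℝ f x v) ^ 2 := mul_le_mul_of_nonneg_right h3 (sq_nonneg _)
          _ ≤ _ := by simpa using h2
      nlinarith [sq_nonneg (f x / 2 + 2 * (ρ * Real.sin (x i / ρ) * fderiv ℝ f x v))]
  rw [integral_add (int_sq hf hc continuous_const) ((int_grad hf hc).const_mul _),
    integral_const_mul (4 * ρ ^ 2)] at hle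
  have e3 : ∫ x, (Real.cos (x i / ρ) - 1 / 4) * f x ^ 2
      = (∫ x, Real.cos (x i / ρ) * f x ^ 2) - ∫ x, (1 / 4) * f x ^ 2 := by
    rw [← integral_sub hI2 (int_sq hf hc continuous_const)]
    congr 1; ext x; ring
  linarith

lemma cos_half {t : ℝ} (h : |t| ≤ 1) : 1 / 2 ≤ Real.cos t := by
  have := Real.one_sub_sq_div_two_le_cos (x := t)
  have : t ^ 2 ≤ 1 := by rw [← sq_abs]; nlinarith [abs_nonneg t]
  linarith

lemma poinc {d : ℕ} (i : Fin d) {f : EuclideanSpace ℝ (Fin d) → ℝ} {r : ℝ} (hr : 0 < r)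
    (hf : AdmFn d (Metric.ball 0 r) f) :
    ∫ x, f x ^ 2 ≤ 16 * r ^ 2 * ∫ x, ‖gradient f x‖ ^ 2 := by
  obtain ⟨h1, h2, h3, -⟩ := hf
  have k := key_ineq i h1 h2 hr
  have : ∫ x, (1 / 4) * f x ^ 2 ≤ ∫ x, (Real.cos (x i / r) - 1 / 4) * f x ^ 2 := by
    apply integral_mono (int_sq h1 h2 continuous_const) (int_sq h1 h2 (by fun_prop))
    intro x
    by_cases hx : x ∈ tsupport f
    · have := h3 hx
      simp only [Metric.mem_ball, dist_zero_right] at this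
      have hi : |x i| ≤ ‖x‖ := by simpa using PiLp.norm_apply_le x i
      have := cos_half (t := x i / r) (by
        rw [abs_div, abs_of_pos hr, div_le_one hr]; linarith)
      apply mul_le_mul_of_nonneg_right _ (sq_nonneg _)
      linarith
    · simp [image_eq_zero_of_notMem_tsupport hx]
  rw [integral_const_mul] at this
  linarith

lemma cont_pot {d : ℕ} {s : ℝ} (hs : 0 < s) :
    Continuous (fun x : EuclideanSpace ℝ (Fin d) => ‖x‖ ^ (2 * s)) :=
  continuous_norm.rpow_const (fun _ => Or.inr (by positivity))

lemma uncert {d : ℕ} (i : Fin d) {f : EuclideanSpace ℝ (Fin d) → ℝ} {ρ s : ℝ} (hρ : 0 < ρ)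
    (hs : 0 < s) (h1 : ContDiff ℝ (⊤ : ℕ∞) f) (h2 : HasCompactSupport f) :
    ∫ x, f x ^ 2 ≤ 16 * ρ ^ 2 * (∫ x, ‖gradient f x‖ ^ 2)
      + 6 * ρ ^ (-(2 * s)) * ∫ x, ‖x‖ ^ (2 * s) * f x ^ 2 := by
  have k := key_ineq i h1 h2 hρ
  have : ∫ x, (1 / 4 * f x ^ 2 - 3 / 2 * ρ ^ (-(2 * s)) * (‖x‖ ^ (2 * s) * f x ^ 2))
      ≤ ∫ x, (Real.cos (x i / ρ) - 1 / 4) * f x ^ 2 := by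
    apply integral_mono ((int_sq h1 h2 continuous_const).sub
      ((int_sq h1 h2 (cont_pot hs)).const_mul _)) (int_sq h1 h2 (by fun_prop))
    intro x
    have hi : |x i| ≤ ‖x‖ := by simpa using PiLp.norm_apply_le x i
    have hp : 0 ≤ ρ ^ (-(2 * s)) * ‖x‖ ^ (2 * s) := by positivity
    have : 1 / 2 - 3 / 2 * (ρ ^ (-(2 * s)) * ‖x‖ ^ (2 * s)) ≤ Real.cos (x i / ρ) := by
      by_cases hx : |x i| ≤ ρ
      · have := cos_half (t := x i / ρ) (by
          rw [abs_div, abs_of_pos hρ, div_le_one hρ]; linarith)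
        linarith
      · push Not at hx
        have h5 : ρ ^ (2 * s) ≤ ‖x‖ ^ (2 * s) :=
          Real.rpow_le_rpow hρ.le (by linarith) (by positivity)
        have h6 : 1 ≤ ρ ^ (-(2 * s)) * ‖x‖ ^ (2 * s) := by
          calc (1 : ℝ) = ρ ^ (-(2 * s)) * ρ ^ (2 * s) := by
                rw [← Real.rpow_add hρ]; simp
            _ ≤ _ := mul_le_mul_of_nonneg_left h5 (by positivity)
        linarith [Real.neg_one_le_cos (x i / ρ)]
    have h7 := mul_le_mul_of_nonneg_right this (sq_nonneg (f x))
    simp only [Pi.sub_apply]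
    nlinarith
  rw [integral_sub (int_sq h1 h2 continuous_const) ((int_sq h1 h2 (cont_pot hs)).const_mul _),
    integral_const_mul, integral_const_mul] at this
  linarith

lemma denom_pos {d : ℕ} {Ω} {f : EuclideanSpace ℝ (Fin d) → ℝ} (hf : AdmFn d Ω f) :
    0 < ∫ x, f x ^ 2 := by
  obtain ⟨h1, h2, h3, h4⟩ := hf
  obtain ⟨x, hx⟩ := Function.ne_iff.1 h4
  have hint : Integrable (fun x => f x ^ 2) := by
    simpa using int_sq h1 h2 (g := fun _ => 1) continuous_const
  apply Continuous.integral_pos_of_hasCompactSupport_nonneg_nonzero (x := x)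
  · exact h1.continuous.pow 2
  · exact h2.mono (fun x hx => by
      simp only [Function.mem_support] at hx ⊢
      intro h; simp [h] at hx)
  · intro x; exact sq_nonneg _
  · simpa using hx

/-- Rayleigh quotients -/
noncomputable def RQ (d : ℕ) (s σ : ℝ) (f : EuclideanSpace ℝ (Fin d) → ℝ) : ℝ :=
  ((∫ x, ‖gradient f x‖ ^ 2) + σ * ∫ x, ‖x‖ ^ (2 * s) * f x ^ 2) / ∫ x, f x ^ 2

lemma E1_eq (d : ℕ) {s : ℝ} (hs : 0 < s) (σ : ℝ) (Ω : Set (EuclideanSpace ℝ (Fin d))) :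
    schrodingerE1 d s σ Ω = sInf (RQ d s σ '' {f | AdmFn d Ω f}) := by
  unfold schrodingerE1
  congr 1
  ext q
  simp only [mem_ofPred_eq, mem_image]
  have key : ∀ f, AdmFn d Ω f →
      (∫ x in Ω, (‖gradient f x‖ ^ 2 + σ * ‖x‖ ^ (2 * s) * (f x) ^ 2)) /
        (∫ x in Ω, (f x) ^ 2) = RQ d s σ f := by
    rintro f ⟨h1, h2, h3, h4⟩
    unfold RQ
    rw [setIntegral_eq_integral_of_forall_compl_eq_zero,
      setIntegral_eq_integral_of_forall_compl_eq_zero]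
    · congr 1
      rw [← integral_const_mul, ← integral_add (int_grad h1 h2)
        ((int_sq h1 h2 (cont_pot hs)).const_mul _)]
      congr 1; ext x; ring
    · intro x hx
      simp [image_eq_zero_of_notMem_tsupport (fun h => hx (h3 h))]
    · intro x hx
      simp [image_eq_zero_of_notMem_tsupport (fun h => hx (h3 h)),
        adm_grad_zero (fun h => hx (h3 h))]
  constructor
  · rintro ⟨f, h1, h2, h3, h4, rfl⟩
    exact ⟨f, ⟨h1, h2, h3, h4⟩, (key f ⟨h1, h2, h3, h4⟩).symm⟩
  · rintro ⟨f, hf, rfl⟩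
    exact ⟨f, hf.1, hf.2.1, hf.2.2.1, hf.2.2.2, (key f hf).symm⟩

lemma adm_nonempty (d : ℕ) {r : ℝ} (hr : 0 < r) : ∃ f, AdmFn d (Metric.ball 0 r) f := by
  let b : ContDiffBump (0 : EuclideanSpace ℝ (Fin d)) := ⟨r / 4, r / 2, by linarith, by linarith⟩
  refine ⟨b, b.contDiff, b.hasCompactSupport, ?_, ?_⟩
  · rw [b.tsupport_eq]
    exact Metric.closedBall_subset_ball (by show r / 2 < r; linarith)
  · intro h
    have := b.one_of_mem_closedBall (x := 0) (Metric.mem_closedBall_self b.rIn_pos.le)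
    rw [h] at this
    simp at this

lemma pot_nonneg {d : ℕ} {s : ℝ} (f : EuclideanSpace ℝ (Fin d) → ℝ) :
    0 ≤ ∫ x, ‖x‖ ^ (2 * s) * f x ^ 2 := integral_nonneg (fun x => by positivity)

lemma grad_nonneg {d : ℕ} (f : EuclideanSpace ℝ (Fin d) → ℝ) :
    0 ≤ ∫ x, ‖gradient f x‖ ^ 2 := integral_nonneg (fun x => by positivity)

lemma RQ_bdd {d : ℕ} {s σ : ℝ} (hσ : 0 < σ) (Ω) : BddBelow (RQ d s σ '' {f | AdmFn d Ω f}) := by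
  refine ⟨0, ?_⟩
  rintro _ ⟨f, hf, rfl⟩
  have := denom_pos hf
  have := pot_nonneg (s := s) f
  have := grad_nonneg f
  unfold RQ
  positivity

lemma E1_concave (d : ℕ) {s r : ℝ} (hs : 0 < s) (hr : 0 < r) :
    ConcaveOn ℝ (Ioi 0) (fun σ => schrodingerE1 d s σ (Metric.ball 0 r)) := by
  refine ⟨convex_Ioi 0, ?_⟩
  intro x hx y hy a b ha hb hab
  obtain ⟨f₀, hf₀⟩ : {f | AdmFn d (Metric.ball 0 r) f}.Nonempty := adm_nonempty d hr
  simp only [E1_eq d hs, smul_eq_mul]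
  refine le_csInf (Nonempty.image _ ⟨f₀, hf₀⟩) ?_
  rintro _ ⟨f, hf, rfl⟩
  have k1 := csInf_le (RQ_bdd (s := s) hx _) (mem_image_of_mem (RQ d s x) hf)
  have k2 := csInf_le (RQ_bdd (s := s) hy _) (mem_image_of_mem (RQ d s y) hf)
  have : RQ d s (a * x + b * y) f = a * RQ d s x f + b * RQ d s y f := by
    unfold RQ
    have hb' : b = 1 - a := by linarith
    subst hb'
    ring
  rw [this]
  exact add_le_add (mul_le_mul_of_nonneg_left k1 ha) (mul_le_mul_of_nonneg_left k2 hb)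

lemma E1_lower1 {d : ℕ} (i : Fin d) {s r σ : ℝ} (hs : 0 < s) (hr : 0 < r) (hσ : 0 < σ) :
    1 / (16 * r ^ 2) ≤ schrodingerE1 d s σ (Metric.ball 0 r) := by
  obtain ⟨f₀, hf₀⟩ : {f | AdmFn d (Metric.ball 0 r) f}.Nonempty := adm_nonempty d hr
  rw [E1_eq d hs]
  refine le_csInf (Nonempty.image _ ⟨f₀, hf₀⟩) ?_
  rintro _ ⟨f, hf, rfl⟩
  unfold RQ
  rw [div_le_div_iff₀ (by positivity) (denom_pos hf)]
  have := poinc i hr hf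
  have := pot_nonneg (s := s) f
  have : 0 ≤ σ * (∫ x, ‖x‖ ^ (2 * s) * f x ^ 2) * (16 * r ^ 2) := by positivity
  linarith

lemma E1_lower2 {d : ℕ} (i : Fin d) {s r σ : ℝ} (hs : 0 < s) (hr : 0 < r) (hσ : 0 < σ) :
    σ ^ (1 / (1 + s)) / 16 ≤ schrodingerE1 d s σ (Metric.ball 0 r) := by
  obtain ⟨f₀, hf₀⟩ : {f | AdmFn d (Metric.ball 0 r) f}.Nonempty := adm_nonempty d hr
  rw [E1_eq d hs]
  refine le_csInf (Nonempty.image _ ⟨f₀, hf₀⟩) ?_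
  rintro _ ⟨f, hf, rfl⟩
  unfold RQ
  rw [div_le_div_iff₀ (by positivity) (denom_pos hf)]
  have hρ : 0 < σ ^ (-(1 / (2 * (1 + s)))) := by positivity
  have k := uncert i hρ hs hf.1 hf.2.1
  have e1 : (σ ^ (-(1 / (2 * (1 + s))))) ^ 2 = (σ ^ (1 / (1 + s)))⁻¹ := by
    rw [← Real.rpow_natCast, ← Real.rpow_mul hσ.le, ← Real.rpow_neg hσ.le]
    congr 1; push_cast; field_simp
  have e2 : (σ ^ (-(1 / (2 * (1 + s))))) ^ (-(2 * s)) = (σ ^ (1 / (1 + s)))⁻¹ * σ := by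
    rw [← Real.rpow_mul hσ.le, ← Real.rpow_neg hσ.le, ← Real.rpow_add_one hσ.ne']
    congr 1; field_simp; ring
  rw [e1, e2] at k
  have hp : 0 < σ ^ (1 / (1 + s)) := by positivity
  set p := σ ^ (1 / (1 + s))
  have := pot_nonneg (s := s) f
  set P := ∫ x, ‖x‖ ^ (2 * s) * f x ^ 2
  set G := ∫ x, ‖gradient f x‖ ^ 2
  set D := ∫ x, f x ^ 2
  have k2 := mul_le_mul_of_nonneg_left k hp.le
  have e3 : p * (16 * p⁻¹ * G + 6 * (p⁻¹ * σ) * P) = 16 * G + 6 * (σ * P) := by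
    field_simp
  rw [e3] at k2
  have : 0 ≤ σ * P := by positivity
  linarith

lemma exists_min_of_tendsto {F : ℝ → ℝ} (hc : ContinuousOn F (Ioi 0))
    (h0 : Tendsto F (nhdsWithin 0 (Ioi 0)) atTop) (h1 : Tendsto F atTop atTop) :
    ∃ σ, 0 < σ ∧ ∀ τ, 0 < τ → F σ ≤ F τ := by
  have a1 := h0.eventually (eventually_gt_atTop (F 1))
  have a2 := h1.eventually (eventually_gt_atTop (F 1))
  obtain ⟨a, ha, ha'⟩ := mem_nhdsGT_iff_exists_Ioo_subset.1 a1
  obtain ⟨b, hb⟩ := eventually_atTop.1 a2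
  have ha0 : 0 < a := ha
  have h1a : a ≤ 1 := by
    by_contra h
    push Not at h
    have : F 1 < F 1 := ha' ⟨one_pos, h⟩
    exact lt_irrefl _ this
  have h1b : 1 ≤ b := by
    by_contra h
    push Not at h
    exact lt_irrefl _ (hb 1 h.le)
  obtain ⟨m, hm, hmin⟩ := isCompact_Icc.exists_isMinOn ⟨1, h1a, h1b⟩
    (hc.mono (fun x (hx : x ∈ Icc a b) => lt_of_lt_of_le ha0 hx.1))
  have hm1 : F m ≤ F 1 := hmin ⟨h1a, h1b⟩
  refine ⟨m, lt_of_lt_of_le ha0 hm.1, fun τ hτ => ?_⟩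
  rcases lt_or_ge τ a with h | h
  · have : F 1 < F τ := ha' ⟨hτ, h⟩
    linarith
  · rcases le_or_gt b τ with h' | h'
    · have := hb τ h'
      linarith
    · exact hmin ⟨h, h'.le⟩

end helpers

/-- the function `F(σ) = σ^{-d₂/(d₁+(1+s)d₂)} E₁(σ, B₁)` blows up as
`σ → 0⁺` and as `σ → +∞`, and attains a global minimum on `(0,∞)`.  Here `B₁` is the
ball in `ℝ^{d₁}` of volume `1` centered at the origin. -/
theorem rescaled_E1_attains_min (d₁ d₂ : ℕ) (hd₁ : 1 ≤ d₁) (hd₂ : 1 ≤ d₂)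
    (s : ℝ) (hs : 0 < s)
    (r₁ : ℝ) (hr₁ : 0 < r₁)
    (hB₁ : volume (Metric.ball (0 : EuclideanSpace ℝ (Fin d₁)) r₁) = 1) :
    (Filter.Tendsto
        (fun σ : ℝ => σ ^ (-(d₂ : ℝ) / ((d₁ : ℝ) + (1 + s) * (d₂ : ℝ))) *
          schrodingerE1 d₁ s σ (Metric.ball (0 : EuclideanSpace ℝ (Fin d₁)) r₁))
        (nhdsWithin 0 (Set.Ioi 0)) Filter.atTop) ∧
    (Filter.Tendsto
        (fun σ : ℝ => σ ^ (-(d₂ : ℝ) / ((d₁ : ℝ) + (1 + s) * (d₂ : ℝ))) *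
          schrodingerE1 d₁ s σ (Metric.ball (0 : EuclideanSpace ℝ (Fin d₁)) r₁))
        Filter.atTop Filter.atTop) ∧
    (∃ σstar : ℝ, 0 < σstar ∧ ∀ σ : ℝ, 0 < σ →
      σstar ^ (-(d₂ : ℝ) / ((d₁ : ℝ) + (1 + s) * (d₂ : ℝ))) *
          schrodingerE1 d₁ s σstar (Metric.ball (0 : EuclideanSpace ℝ (Fin d₁)) r₁) ≤
        σ ^ (-(d₂ : ℝ) / ((d₁ : ℝ) + (1 + s) * (d₂ : ℝ))) *
          schrodingerE1 d₁ s σ (Metric.ball (0 : EuclideanSpace ℝ (Fin d₁)) r₁)) := by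
  have hd₁' : (1 : ℝ) ≤ d₁ := by exact_mod_cast hd₁
  have hd₂' : (1 : ℝ) ≤ d₂ := by exact_mod_cast hd₂
  have hden : 0 < (d₁ : ℝ) + (1 + s) * (d₂ : ℝ) := by positivity
  set e : ℝ := -(d₂ : ℝ) / ((d₁ : ℝ) + (1 + s) * (d₂ : ℝ)) with he
  have he0 : e < 0 := div_neg_of_neg_of_pos (by linarith) hden
  have he1 : 0 < e + 1 / (1 + s) := by
    have : e + 1 / (1 + s) = d₁ / (((d₁ : ℝ) + (1 + s) * (d₂ : ℝ)) * (1 + s)) := by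
      rw [he]; field_simp; ring
    rw [this]; positivity
  let i : Fin d₁ := ⟨0, hd₁⟩
  have t0 : Tendsto (fun σ : ℝ => σ ^ e *
      schrodingerE1 d₁ s σ (Metric.ball (0 : EuclideanSpace ℝ (Fin d₁)) r₁))
      (nhdsWithin 0 (Set.Ioi 0)) atTop := by
    have h := (tendsto_rpow_neg_nhdsGT_zero he0).atTop_mul_const
      (show 0 < 1 / (16 * r₁ ^ 2) by positivity)
    refine tendsto_atTop_mono' _ ?_ h
    filter_upwards [self_mem_nhdsWithin] with σ hσ
    have hσ' : 0 < σ := hσ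
    exact mul_le_mul_of_nonneg_left (E1_lower1 i hs hr₁ hσ') (by positivity)
  have t1 : Tendsto (fun σ : ℝ => σ ^ e *
      schrodingerE1 d₁ s σ (Metric.ball (0 : EuclideanSpace ℝ (Fin d₁)) r₁))
      atTop atTop := by
    have h := (tendsto_rpow_atTop he1).atTop_div_const (show (0 : ℝ) < 16 by norm_num)
    refine tendsto_atTop_mono' _ ?_ h
    filter_upwards [eventually_gt_atTop 0] with σ hσ
    rw [Real.rpow_add hσ, mul_div_assoc]
    exact mul_le_mul_of_nonneg_left (E1_lower2 i hs hr₁ hσ) (by positivity)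
  refine ⟨t0, t1, exists_min_of_tendsto (F := fun σ : ℝ => σ ^ e *
      schrodingerE1 d₁ s σ (Metric.ball (0 : EuclideanSpace ℝ (Fin d₁)) r₁)) ?_ t0 t1⟩
  apply ContinuousOn.mul
  · exact continuousOn_id.rpow_const (fun x hx => Or.inl (ne_of_gt hx))
  · exact (E1_concave d₁ hs hr₁).continuousOn isOpen_Ioi
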